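/- Let Ω and X be compact metric spaces and let Φ be a skew-product transformation on Ω×X with continuous base φ: Ω → Ω satisfying condition (H). Let a ∈ ℝ and let f: Ω×X → ℝ be a bounded Borel measurable function such that μ(D_f) = 0 and ∫_{Ω×X} f dμ ≥ a for every Φ-invariant Borel probability measure μ on Ω×X. Then for every ε > 0 there exists N ∈ ℕ such that for all n ≥ N and all (ω,x) ∈ Ω×X, (1/n) Σ_{i=0}^{n-1} f(Φ^i(ω,x)) ≥ a − ε. -/

import Mathlib

open MeasureTheory Filter Topology

/-!
If the lower bound fails, there are orbit segments of lengths `n k → ∞` whose Birkhoff averages stay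
below `a - ε`. By compactness the empirical measures along them have a weak limit point `μ`. The
projection of `μ` to the base is invariant because the base map is continuous; condition (H) then
makes `μ` blind to the discontinuities of the skew product, which is exactly what is needed for `μ`
itself to be invariant. Hence `f` is `μ`-a.e. continuous, so its averages along the segments
converge to `∫ f dμ ≥ a`, a contradiction.
-/

section WeakConvergence

lemma closure_preimage_subset_union_not_continuousAt {E F : Type*} [TopologicalSpace E]
    [TopologicalSpace F] (g : E → F) {s : Set F} (hs : IsClosed s) :
    closure (g ⁻¹' s) ⊆ g ⁻¹' s ∪ {x | ¬ ContinuousAt g x} := by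
  intro x hx
  by_cases hgx : ContinuousAt g x
  · have hgx_mem : g x ∈ closure (g '' (g ⁻¹' s)) := hgx.continuousWithinAt.mem_closure_image hx
    exact .inl (closure_minimal (Set.image_preimage_subset g s) hs hgx_mem)
  · exact .inr hgx

variable {E F ι : Type*} [TopologicalSpace E] [MeasurableSpace E] [OpensMeasurableSpace E]
  [HasOuterApproxClosed E] [TopologicalSpace F] [MeasurableSpace F] [OpensMeasurableSpace F]
  {L : Filter ι} [L.IsCountablyGenerated] {μs : ι → ProbabilityMeasure E} {μ : ProbabilityMeasure E}

theorem tendsto_map_of_ae_continuousAt (hμ : Tendsto μs L (𝓝 μ)) {g : E → F} (hg : Measurable g)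
    (hg_cont : ∀ᵐ x ∂(μ : Measure E), ContinuousAt g x) :
    Tendsto (fun i ↦ (μs i).map hg.aemeasurable) L (𝓝 (μ.map hg.aemeasurable)) := by
  refine tendsto_of_forall_isClosed_limsup_le' fun s hs ↦ ?_
  simp only [ProbabilityMeasure.map_apply' _ _ hs.measurableSet]
  calc limsup (fun i ↦ (μs i : Measure E) (g ⁻¹' s)) L
      ≤ limsup (fun i ↦ (μs i : Measure E) (closure (g ⁻¹' s))) L :=
        limsup_le_limsup (.of_forall fun i ↦ measure_mono subset_closure)
    _ ≤ (μ : Measure E) (closure (g ⁻¹' s)) :=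
        ProbabilityMeasure.limsup_measure_closed_le_of_tendsto hμ isClosed_closure
    _ ≤ (μ : Measure E) (g ⁻¹' s ∪ {x | ¬ ContinuousAt g x}) :=
        measure_mono (closure_preimage_subset_union_not_continuousAt g hs)
    _ = (μ : Measure E) (g ⁻¹' s) :=
        measure_congr (union_ae_eq_left_of_ae_eq_empty (ae_eq_empty.2 (ae_iff.1 hg_cont)))

theorem tendsto_integral_of_ae_continuousAt (hμ : Tendsto μs L (𝓝 μ)) {g : E → ℝ}
    (hg : Measurable g) {C : ℝ} (hC : ∀ x, |g x| ≤ C)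
    (hg_cont : ∀ᵐ x ∂(μ : Measure E), ContinuousAt g x) :
    Tendsto (fun i ↦ ∫ x, g x ∂(μs i : Measure E)) L (𝓝 (∫ x, g x ∂(μ : Measure E))) := by
  -- Viewed as a map into `[-C, C]`, on which the coordinate is a bounded continuous function,
  -- `g` reduces the claim to weak convergence of image measures.
  let gC : E → Set.Icc (-C) C := Set.codRestrict g _ fun x ↦ abs_le.1 (hC x)
  have hgC : Measurable gC := hg.subtype_mk
  let coord : BoundedContinuousFunction (Set.Icc (-C) C) ℝ :=
    .mkOfCompact ⟨Subtype.val, continuous_subtype_val⟩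
  have integral_coord (ν : ProbabilityMeasure E) :
      ∫ t, coord t ∂(ν.map hgC.aemeasurable : Measure (Set.Icc (-C) C)) =
        ∫ x, g x ∂(ν : Measure E) :=
    integral_map hgC.aemeasurable coord.continuous.aestronglyMeasurable
  have hgC_cont : ∀ᵐ x ∂(μ : Measure E), ContinuousAt gC x :=
    hg_cont.mono fun x hx ↦ hx.codRestrict _
  simpa only [integral_coord] using ProbabilityMeasure.tendsto_iff_forall_integral_tendsto.1
    (tendsto_map_of_ae_continuousAt hμ hgC hgC_cont) coord

end WeakConvergence

section BirkhoffAverage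

variable {α : Type*}

lemma birkhoffAverage_comp_self (R : Type*) {M : Type*} [DivisionSemiring R] [AddCommMonoid M]
    [Module R M] (T : α → α) (g : α → M) (n : ℕ) (x : α) :
    birkhoffAverage R T (g ∘ T) n x = birkhoffAverage R T g n (T x) := by
  simp only [birkhoffAverage, birkhoffSum, Function.comp_apply, ← Function.iterate_succ_apply,
    Function.iterate_succ_apply']

lemma tendsto_birkhoffAverage_apply_sub_birkhoffAverage_of_tendsto_atTop (𝕜 : Type*) {ι G : Type*}
    [RCLike 𝕜] [NormedAddCommGroup G] [NormedSpace 𝕜 G] {L : Filter ι} {n : ι → ℕ}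
    (hn : Tendsto n L atTop) (T : α → α) {g : α → G} (hg : Bornology.IsBounded (Set.range g))
    (x : ι → α) :
    Tendsto (fun i ↦ birkhoffAverage 𝕜 T g (n i) (T (x i)) - birkhoffAverage 𝕜 T g (n i) (x i))
      L (𝓝 0) := by
  obtain ⟨C, hC⟩ := Metric.isBounded_range_iff.1 hg
  have hCn : Tendsto (fun i ↦ C / n i) L (𝓝 0) := (tendsto_const_div_atTop_nhds_zero_nat C).comp hn
  refine squeeze_zero_norm (fun i ↦ ?_) hCn
  rw [← dist_eq_norm, dist_birkhoffAverage_apply_birkhoffAverage]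
  gcongr
  exact hC _ _

end BirkhoffAverage

section EmpiricalMeasure

variable {E : Type*} [MeasurableSpace E]

/-- The empirical measure of the orbit segment `x, T x, …, T^[n - 1] x`: the uniform average of the
Dirac masses at its points. Segments are required to be nonempty, so that this is a probability
measure. -/
noncomputable def empiricalMeasure (T : E → E) (n : ℕ) [NeZero n] (x : E) : ProbabilityMeasure E :=
  ⟨(n : ENNReal)⁻¹ • ∑ i ∈ Finset.range n, Measure.dirac (T^[i] x), ⟨by
    simp [ENNReal.inv_mul_cancel (NeZero.ne (n : ENNReal)) (ENNReal.natCast_ne_top n)]⟩⟩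

lemma integral_empiricalMeasure {G : Type*} [NormedAddCommGroup G] [NormedSpace ℝ G]
    [CompleteSpace G] (T : E → E) (n : ℕ) [NeZero n] (x : E) {g : E → G}
    (hg : StronglyMeasurable g) :
    ∫ y, g y ∂(empiricalMeasure T n x : Measure E) = birkhoffAverage ℝ T g n x := by
  have hg_int (y : E) : Integrable g (Measure.dirac y) :=
    integrable_dirac' hg enorm_lt_top
  rw [empiricalMeasure, ProbabilityMeasure.coe_mk, integral_smul_measure,
    integral_finsetSum_measure fun i _ ↦ hg_int _]
  simp [birkhoffAverage, birkhoffSum, integral_dirac' _ _ hg]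

variable [TopologicalSpace E] [OpensMeasurableSpace E] [HasOuterApproxClosed E]
  {ι : Type*} {L : Filter ι} [L.IsCountablyGenerated]
  {T : E → E} {n : ι → ℕ} [∀ i, NeZero (n i)] {x : ι → E} {μ : ProbabilityMeasure E}

theorem tendsto_birkhoffAverage_of_tendsto_empiricalMeasure
    (hμ : Tendsto (fun i ↦ empiricalMeasure T (n i) (x i)) L (𝓝 μ)) {g : E → ℝ}
    (hg : Measurable g) {C : ℝ} (hC : ∀ y, |g y| ≤ C)
    (hg_cont : ∀ᵐ y ∂(μ : Measure E), ContinuousAt g y) :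
    Tendsto (fun i ↦ birkhoffAverage ℝ T g (n i) (x i)) L (𝓝 (∫ y, g y ∂(μ : Measure E))) := by
  simpa only [integral_empiricalMeasure _ _ _ hg.stronglyMeasurable] using
    tendsto_integral_of_ae_continuousAt hμ hg hC hg_cont

theorem map_comp_eq_map_of_tendsto_empiricalMeasure [L.NeBot] {F : Type*} [TopologicalSpace F]
    [HasOuterApproxClosed F] [MeasurableSpace F] [BorelSpace F] (hn : Tendsto n L atTop)
    (hμ : Tendsto (fun i ↦ empiricalMeasure T (n i) (x i)) L (𝓝 μ)) (hT : Measurable T)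
    {π : E → F} (hπ : Measurable π) (hπ_cont : ∀ᵐ y ∂(μ : Measure E), ContinuousAt π y)
    (hπT_cont : ∀ᵐ y ∂(μ : Measure E), ContinuousAt (π ∘ T) y) :
    (μ : Measure E).map (π ∘ T) = (μ : Measure E).map π := by
  have hπT : Measurable (π ∘ T) := hπ.comp hT
  have := Measure.isProbabilityMeasure_map (μ := (μ : Measure E)) hπ.aemeasurable
  have := Measure.isProbabilityMeasure_map (μ := (μ : Measure E)) hπT.aemeasurable
  refine ext_of_forall_integral_eq_of_IsFiniteMeasure fun h ↦ ?_
  have tendsto_average {q : E → F} (hq : Measurable q)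
      (hq_cont : ∀ᵐ y ∂(μ : Measure E), ContinuousAt q y) :
      Tendsto (fun i ↦ birkhoffAverage ℝ T (h ∘ q) (n i) (x i)) L
        (𝓝 (∫ z, h z ∂(μ : Measure E).map q)) := by
    rw [integral_map hq.aemeasurable h.continuous.aestronglyMeasurable]
    exact tendsto_birkhoffAverage_of_tendsto_empiricalMeasure hμ
      (h.continuous.measurable.comp hq) (fun y ↦ h.norm_coe_le_norm (q y))
      (hq_cont.mono fun y hy ↦ h.continuous.continuousAt.comp hy)
  have average_sub : Tendsto (fun i ↦ birkhoffAverage ℝ T (h ∘ π ∘ T) (n i) (x i) -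
      birkhoffAverage ℝ T (h ∘ π) (n i) (x i)) L (𝓝 0) := by
    simp only [← Function.comp_assoc, birkhoffAverage_comp_self]
    exact tendsto_birkhoffAverage_apply_sub_birkhoffAverage_of_tendsto_atTop ℝ hn T
      (h.isBounded_range.subset (Set.range_comp_subset_range π h)) x
  exact sub_eq_zero.1 <| tendsto_nhds_unique
    ((tendsto_average hπT hπT_cont).sub (tendsto_average hπ hπ_cont)) average_sub

end EmpiricalMeasure

section Factor

variable {E Ω : Type*} [TopologicalSpace E] [MeasurableSpace E] [BorelSpace E]
  [TopologicalSpace Ω] [HasOuterApproxClosed Ω] [MeasurableSpace Ω] [BorelSpace Ω]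
  {T : E → E} {φ : Ω → Ω} {π : E → Ω}

theorem measurePreserving_of_semiconj_of_tendsto_empiricalMeasure [HasOuterApproxClosed E]
    {ι : Type*} {L : Filter ι} [L.IsCountablyGenerated] [L.NeBot] {n : ι → ℕ}
    [∀ i, NeZero (n i)] {x : ι → E} {μ : ProbabilityMeasure E} (hT : Measurable T)
    (hφ : Continuous φ) (hπ : Continuous π) (hπT : Function.Semiconj π T φ)
    (hH : ∀ ν : Measure Ω, IsProbabilityMeasure ν → MeasurePreserving φ ν ν →
      ν (π '' {y | ¬ ContinuousAt T y}) = 0)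
    (hn : Tendsto n L atTop) (hμ : Tendsto (fun i ↦ empiricalMeasure T (n i) (x i)) L (𝓝 μ)) :
    MeasurePreserving T (μ : Measure E) μ := by
  have hπT_cont : Continuous (π ∘ T) := hπT.comp_eq ▸ hφ.comp hπ
  have base_invariant :
      MeasurePreserving φ ((μ : Measure E).map π) ((μ : Measure E).map π) := by
    refine ⟨hφ.measurable, ?_⟩
    rw [Measure.map_map hφ.measurable hπ.measurable, ← hπT.comp_eq]
    exact map_comp_eq_map_of_tendsto_empiricalMeasure hn hμ hT hπ.measurable
      (.of_forall fun y ↦ hπ.continuousAt) (.of_forall fun y ↦ hπT_cont.continuousAt)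
  have hT_cont : ∀ᵐ y ∂(μ : Measure E), ContinuousAt T y := by
    have base_null := measure_eq_zero_iff_ae_notMem.1 <| hH _
      (Measure.isProbabilityMeasure_map hπ.measurable.aemeasurable) base_invariant
    filter_upwards [ae_of_ae_map hπ.measurable.aemeasurable base_null] with y hy
    exact not_not.1 fun hy_disc ↦ hy (Set.mem_image_of_mem π hy_disc)
  refine ⟨hT, ?_⟩
  simpa using map_comp_eq_map_of_tendsto_empiricalMeasure hn hμ hT measurable_id
    (.of_forall fun y ↦ continuousAt_id) hT_cont

theorem semi_uniform_ergodic_theorem_SPT_ge_general [CompactSpace E]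
    [TopologicalSpace.MetrizableSpace E] (hT : Measurable T) (hφ : Continuous φ) (hπ : Continuous π)
    (hπT : Function.Semiconj π T φ)
    (hH : ∀ ν : Measure Ω, IsProbabilityMeasure ν → MeasurePreserving φ ν ν →
      ν (π '' {y | ¬ ContinuousAt T y}) = 0)
    {a C : ℝ} {f : E → ℝ} (hf : Measurable f) (hC : ∀ y, |f y| ≤ C)
    (hfa : ∀ μ : Measure E, IsProbabilityMeasure μ → MeasurePreserving T μ μ →
      (∀ᵐ y ∂μ, ContinuousAt f y) ∧ a ≤ ∫ y, f y ∂μ)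
    {ε : ℝ} (hε : 0 < ε) :
    ∀ᶠ n in atTop, ∀ y, a - ε ≤ birkhoffAverage ℝ T f n y := by
  by_contra h_fail
  have h_freq : ∃ᶠ n in atTop, n ≠ 0 ∧ ∃ y, birkhoffAverage ℝ T f n y < a - ε := by
    simpa only [not_forall, not_le] using
      (eventually_ne_atTop 0).and_frequently (not_eventually.1 h_fail)
  obtain ⟨n, hn_mono, hn⟩ := extraction_of_frequently_atTop h_freq
  choose hn_ne x hx using hn
  have (k : ℕ) : NeZero (n k) := ⟨hn_ne k⟩
  obtain ⟨μ, s, hs, hμ⟩ :=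
    CompactSpace.tendsto_subseq fun k ↦ empiricalMeasure T (n k) (x k)
  have hμT : MeasurePreserving T (μ : Measure E) μ :=
    measurePreserving_of_semiconj_of_tendsto_empiricalMeasure hT hφ hπ hπT hH
      (n := fun k ↦ n (s k)) (hn_mono.comp hs).tendsto_atTop hμ
  obtain ⟨hf_cont, le_integral⟩ := hfa μ inferInstance hμT
  have integral_le : ∫ y, f y ∂(μ : Measure E) ≤ a - ε :=
    le_of_tendsto (tendsto_birkhoffAverage_of_tendsto_empiricalMeasure hμ hf hC hf_cont)
      (.of_forall fun k ↦ (hx (s k)).le)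
  linarith

end Factor

/-- Semi-uniform ergodic theorem (lower bound) for skew-product transformations with
discontinuous observation functions. -/
theorem semi_uniform_ergodic_theorem_SPT_ge
    {Ω X : Type*}
    [MetricSpace Ω] [CompactSpace Ω] [MeasurableSpace Ω] [BorelSpace Ω]
    [MetricSpace X] [CompactSpace X] [MeasurableSpace X] [BorelSpace X]
    (φ : Ω → Ω) (hφ : Continuous φ)
    (Φ : Ω × X → Ω × X) (hΦmeas : Measurable Φ)
    (hbase : ∀ p : Ω × X, (Φ p).1 = φ p.1)
    (hH : ∀ ν : Measure Ω, IsProbabilityMeasure ν →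
      (∀ s : Set Ω, MeasurableSet s → ν (φ ⁻¹' s) = ν s) →
      ν (Prod.fst '' {p : Ω × X | ¬ ContinuousAt Φ p}) = 0)
    (a : ℝ) (f : Ω × X → ℝ) (hfmeas : Measurable f)
    (hfbdd : ∃ C : ℝ, ∀ p, |f p| ≤ C)
    (hf : ∀ μ : Measure (Ω × X), IsProbabilityMeasure μ →
      (∀ s : Set (Ω × X), MeasurableSet s → μ (Φ ⁻¹' s) = μ s) →
      μ {p : Ω × X | ¬ ContinuousAt f p} = 0 ∧ ∫ p, f p ∂μ ≥ a) :
    ∀ ε > (0 : ℝ), ∃ N : ℕ, ∀ n ≥ N, ∀ p : Ω × X,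
      (n : ℝ)⁻¹ * ∑ i ∈ Finset.range n, f (Φ^[i] p) ≥ a - ε := by
  intro ε hε
  obtain ⟨C, hC⟩ := hfbdd
  exact eventually_atTop.1 <| semi_uniform_ergodic_theorem_SPT_ge_general hΦmeas hφ continuous_fst
    hbase (fun ν hν h ↦ hH ν hν fun s hs ↦ h.measure_preimage hs.nullMeasurableSet) hfmeas hC
    (fun μ hμ h ↦ hf μ hμ fun s hs ↦ h.measure_preimage hs.nullMeasurableSet) hε
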